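/- arXiv:1812.00256 — 7 statements merged into one kernel-verified Lean document; each statement's English description precedes it below -/
import Mathlib

section
/- Let R be a commutative ring and let S be a commutative R-algebra which is finite and free as an R-module. For every R-module M, the map can : Hom_R(S, R) ⊗_S (M ⊗_R S) → Hom_R(S, M) determined on elementary tensors by can(α ⊗ (m ⊗ t)) = (s ↦ α(s·t) • m) is a well-defined isomorphism of S-modules. -/
open scoped TensorProduct

section DomAction

variable (R S : Type*) [CommRing R] [CommRing S] [Algebra R S]
variable (M : Type*) [AddCommGroup M] [Module R M]

/-- The `S`-module structure on `Hom_R(S, M)` given by `(s • φ) t = φ (s * t)`. -/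
noncomputable instance instModuleHomDom : Module S (S →ₗ[R] M) where
  smul s φ :=
    { toFun := fun t => φ (s * t)
      map_add' := fun t u => by
        show φ (s * (t + u)) = φ (s * t) + φ (s * u)
        rw [mul_add, map_add]
      map_smul' := fun r t => by
        show φ (s * (r • t)) = r • φ (s * t)
        rw [mul_smul_comm, map_smul] }
  one_smul φ := LinearMap.ext fun t => by show φ (1 * t) = φ t; rw [one_mul]
  mul_smul s u φ := LinearMap.ext fun t => by
    show φ (s * u * t) = φ (u * (s * t)); rw [mul_comm s u, mul_assoc]
  smul_zero s := LinearMap.ext fun t => rfl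
  smul_add s φ ψ := LinearMap.ext fun t => rfl
  add_smul s u φ := LinearMap.ext fun t => by
    show φ ((s + u) * t) = φ (s * t) + φ (u * t); rw [add_mul, map_add]
  zero_smul φ := LinearMap.ext fun t => by show φ (0 * t) = 0; rw [zero_mul, map_zero]

/-- Left multiplication by `s : S`, as an `R`-linear endomorphism of `S`. -/
def mulLin (s : S) : S →ₗ[R] S where
  toFun t := s * t
  map_add' := mul_add s
  map_smul' r t := by rw [RingHom.id_apply]; exact mul_smul_comm r s t

@[simp] lemma mulLin_apply (s t : S) : mulLin R S s t = s * t := rfl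

/-- The `S`-module structure on `M ⊗[R] S` through the right tensor factor. -/
noncomputable instance instModuleTensorRight : Module S (M ⊗[R] S) where
  smul s x := TensorProduct.map LinearMap.id (mulLin R S s) x
  one_smul x := by
    show TensorProduct.map LinearMap.id (mulLin R S 1) x = x
    induction x using TensorProduct.induction_on with
    | zero => simp
    | tmul m t => simp
    | add a b ha hb => simp only [map_add, ha, hb]
  mul_smul s u x := by
    show TensorProduct.map LinearMap.id (mulLin R S (s * u)) x
        = TensorProduct.map LinearMap.id (mulLin R S s)
            (TensorProduct.map LinearMap.id (mulLin R S u) x)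
    induction x using TensorProduct.induction_on with
    | zero => simp
    | tmul m t => simp [mul_assoc]
    | add a b ha hb => simp only [map_add, ha, hb]
  smul_zero s := by
    show TensorProduct.map LinearMap.id (mulLin R S s) 0 = 0
    simp
  smul_add s x y := by
    show TensorProduct.map LinearMap.id (mulLin R S s) (x + y)
        = TensorProduct.map LinearMap.id (mulLin R S s) x
          + TensorProduct.map LinearMap.id (mulLin R S s) y
    simp
  add_smul s u x := by
    show TensorProduct.map LinearMap.id (mulLin R S (s + u)) x
        = TensorProduct.map LinearMap.id (mulLin R S s) x
          + TensorProduct.map LinearMap.id (mulLin R S u) x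
    induction x using TensorProduct.induction_on with
    | zero => simp
    | tmul m t => simp [add_mul, TensorProduct.tmul_add]
    | add a b ha hb => simp only [map_add, ha, hb]; abel
  zero_smul x := by
    show TensorProduct.map LinearMap.id (mulLin R S 0) x = 0
    induction x using TensorProduct.induction_on with
    | zero => simp
    | tmul m t => simp
    | add a b ha hb => simp only [map_add, ha, hb]; simp

end DomAction

/-!
Cancelling the base change identifies `Hom_R(S, R) ⊗_S (M ⊗_R S)` with `Hom_R(S, R) ⊗_R M` by
`α ⊗ (m ⊗ t) ↦ (t • α) ⊗ m`, and under this identification `can` becomes the contraction map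
`Hom_R(S, R) ⊗_R M → Hom_R(S, M)`, which is bijective when `S` is finite projective over `R`.
-/

section BaseChange

variable (R S : Type*) [CommRing R] [CommRing S] [Algebra R S]
variable (M : Type*) [AddCommGroup M] [Module R M]

lemma tensorRight_smul_tmul (s : S) (m : M) (t : S) :
    s • (m ⊗ₜ[R] t) = m ⊗ₜ[R] (s * t) := rfl

/-- The swap `M ⊗[R] S ≃ S ⊗[R] M`, as an `S`-linear equivalence from the module structure through
the right tensor factor to the base change of `M` in Mathlib's convention. -/
noncomputable def tensorRightCommEquiv : M ⊗[R] S ≃ₗ[S] S ⊗[R] M where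
  __ := TensorProduct.comm R M S
  map_smul' s x := by
    change TensorProduct.comm R M S (s • x) = s • TensorProduct.comm R M S x
    induction x with
    | zero => simp only [smul_zero, map_zero]
    | tmul m t =>
      rw [tensorRight_smul_tmul, TensorProduct.comm_tmul, TensorProduct.comm_tmul,
        TensorProduct.smul_tmul', smul_eq_mul]
    | add x y hx hy => simp only [smul_add, map_add, hx, hy]

lemma tensorRightCommEquiv_tmul (m : M) (t : S) :
    tensorRightCommEquiv R S M (m ⊗ₜ[R] t) = t ⊗ₜ[R] m := rfl

variable (D : Type*) [AddCommGroup D] [Module R D] [Module S D] [IsScalarTower R S D]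

/-- Cancellation of the base change `M ⊗[R] S` against a tensor product over `S`. -/
noncomputable def cancelTensorRight : D ⊗[S] (M ⊗[R] S) ≃ₗ[S] D ⊗[R] M :=
  (TensorProduct.congr (.refl S D) (tensorRightCommEquiv R S M)).trans
    (TensorProduct.AlgebraTensorModule.cancelBaseChange R S S D M)

lemma cancelTensorRight_tmul (d : D) (m : M) (t : S) :
    cancelTensorRight R S M D (d ⊗ₜ[S] (m ⊗ₜ[R] t)) = (t • d) ⊗ₜ[R] m := by
  rw [cancelTensorRight, LinearEquiv.trans_apply, TensorProduct.congr_tmul,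
    LinearEquiv.refl_apply, tensorRightCommEquiv_tmul,
    TensorProduct.AlgebraTensorModule.cancelBaseChange_tmul]

end BaseChange

section Can

variable (R S : Type*) [CommRing R] [CommRing S] [Algebra R S]
variable (M : Type*) [AddCommGroup M] [Module R M]

lemma homDom_smul_apply (s : S) (φ : S →ₗ[R] M) (t : S) : (s • φ) t = φ (s * t) := rfl

instance isScalarTower_homDom : IsScalarTower R S (S →ₗ[R] M) where
  smul_assoc r s φ := by
    ext t
    rw [homDom_smul_apply, smul_mul_assoc, map_smul, LinearMap.smul_apply, homDom_smul_apply]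

lemma dualTensorHom_smul (s : S) (x : (S →ₗ[R] R) ⊗[R] M) :
    dualTensorHom R S M (s • x) = s • dualTensorHom R S M x := by
  induction x with
  | zero => simp only [smul_zero, map_zero]
  | tmul α m =>
    ext t
    rw [TensorProduct.smul_tmul', homDom_smul_apply, dualTensorHom_apply, dualTensorHom_apply,
      homDom_smul_apply]
  | add x y hx hy => simp only [smul_add, map_add, hx, hy]

/-- The map `can : Hom_R(S, R) ⊗_S (M ⊗_R S) → Hom_R(S, M)`, for an arbitrary `R`-algebra `S`. It
is defined as `dualTensorHom` after cancelling the base change, so that no balancedness over `S`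
has to be checked by hand. -/
noncomputable def canMap : (S →ₗ[R] R) ⊗[S] (M ⊗[R] S) →ₗ[S] (S →ₗ[R] M) :=
  { dualTensorHom R S M with map_smul' := dualTensorHom_smul R S M } ∘ₗ
    (cancelTensorRight R S M (S →ₗ[R] R)).toLinearMap

lemma canMap_apply (x : (S →ₗ[R] R) ⊗[S] (M ⊗[R] S)) :
    canMap R S M x = dualTensorHom R S M (cancelTensorRight R S M (S →ₗ[R] R) x) := rfl

lemma canMap_tmul (α : S →ₗ[R] R) (m : M) (t s : S) :
    canMap R S M (α ⊗ₜ[S] (m ⊗ₜ[R] t)) s = α (s * t) • m := by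
  rw [canMap_apply, cancelTensorRight_tmul, dualTensorHom_apply, homDom_smul_apply, mul_comm]

lemma canMap_bijective_iff :
    Function.Bijective (canMap R S M) ↔ Function.Bijective (dualTensorHom R S M) :=
  (cancelTensorRight R S M (S →ₗ[R] R)).bijective.of_comp_iff (dualTensorHom R S M)

end Can

theorem can_iso_of_finite_free_general
    (R S : Type*) [CommRing R] [CommRing S] [Algebra R S]
    [Module.Finite R S] [Module.Projective R S]
    (M : Type*) [AddCommGroup M] [Module R M] :
    ∃ e : ((S →ₗ[R] R) ⊗[S] (M ⊗[R] S)) ≃ₗ[S] (S →ₗ[R] M),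
      ∀ (α : S →ₗ[R] R) (m : M) (t : S) (s : S),
        e (α ⊗ₜ[S] (m ⊗ₜ[R] t)) s = α (s * t) • m :=
  ⟨.ofBijective (canMap R S M) ((canMap_bijective_iff R S M).2 dualTensorHom_bijective),
    canMap_tmul R S M⟩

/-- Let `S` be a commutative `R`-algebra which is finite and free as an `R`-module.  For every
`R`-module `M`, the map `can : Hom_R(S, R) ⊗_S (M ⊗_R S) → Hom_R(S, M)` with
`can (α ⊗ (m ⊗ t)) = (s ↦ α (s * t) • m)` is a well-defined isomorphism of `S`-modules. -/
theorem can_iso_of_finite_free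
    (R S : Type*) [CommRing R] [CommRing S] [Algebra R S]
    [Module.Finite R S] [Module.Free R S]
    (M : Type*) [AddCommGroup M] [Module R M] :
    ∃ e : ((S →ₗ[R] R) ⊗[S] (M ⊗[R] S)) ≃ₗ[S] (S →ₗ[R] M),
      ∀ (α : S →ₗ[R] R) (m : M) (t : S) (s : S),
        e (α ⊗ₜ[S] (m ⊗ₜ[R] t)) s = α (s * t) • m :=
  can_iso_of_finite_free_general R S M
end

section
/- Let R be a commutative ring, let f_1, …, f_n ∈ R be a regular sequence (for each i, f_i is a nonzerodivisor on R/(f_1,…,f_{i−1}), and the ideal (f_1,…,f_n) is proper), and let I = (f_1,…,f_n). Then for every R-module M there is an isomorphism of R-modules Ext^n_R(R/I, M) ≅ M/IM. -/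
open CategoryTheory

/-!
If `r` is a nonzerodivisor on a module `X` of projective dimension at most `n`, the long exact
sequence of `0 ⟶ X ⟶ X ⟶ X/rX ⟶ 0` identifies `Extⁿ⁺¹(X/rX, M)` with `Extⁿ(X, M)/r Extⁿ(X, M)`, and
`X/rX` has projective dimension at most `n + 1`. Iterating along a regular sequence, starting from
`X = R` and `Ext⁰(R, M) = M`, raises the degree by one for each element and ends at
`Extⁿ(R/I, M) = M/IM`.

The long exact sequence is available for the groups `Abelian.Ext`, so these are compared
`R`-linearly with the derived functor `Ext R C n` through the cocycles of a projective resolution.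
-/

universe w v u t

section DerivedFunctorComparison

open CochainComplex.HomComplex

variable {R : Type t} [Ring R] {C : Type u} [Category.{v} C] [Abelian C] [Linear R C]
  [HasExt.{w} C] {X Y : C} (P : ProjectiveResolution X) {n : ℕ}

lemma smul_extMk (r : R) (f : P.complex.X n ⟶ Y) (m : ℕ) (hm : n + 1 = m)
    (hf : P.complex.d m n ≫ f = 0) :
    r • P.extMk f m hm hf = P.extMk (r • f) m hm (by rw [Linear.comp_smul, hf, smul_zero]) := by
  simp only [Abelian.Ext.smul_eq_comp_mk₀, P.extMk_comp_mk₀, Linear.comp_smul, Category.comp_id]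

lemma extMk_degree_zero_eq_zero_iff (f : P.complex.X 0 ⟶ Y) (m : ℕ) (hm : 0 + 1 = m)
    (hf : P.complex.d m 0 ≫ f = 0) :
    P.extMk f m hm hf = 0 ↔ f = 0 := by
  have d_eq_zero : P.cochainComplex.d (-(0 : ℕ)) 1 = 0 :=
    (P.cochainComplex.isZero_of_isStrictlyLE 0 1).eq_of_tgt _ _
  rw [← P.extEquivCohomologyClass.apply_eq_iff_eq, P.extEquivCohomologyClass_extMk,
    P.extEquivCohomologyClass_zero, CohomologyClass.mk_eq_zero_iff,
    Cocycle.toSingleMk_mem_coboundaries_iff _ _ _ _ _ 1 (by simp), d_eq_zero]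
  simp only [Limits.zero_comp, exists_const]
  rw [eq_comm, Preadditive.IsIso.comp_left_eq_zero]

variable (R) in
lemma extMk_eq_zero_iff_mem_range (f : P.complex.X n ⟶ Y) (m : ℕ) (hm : n + 1 = m)
    (hf : P.complex.d m n ≫ f = 0) :
    P.extMk f m hm hf = 0 ↔
      f ∈ LinearMap.range ((P.complex.linearYonedaObj R Y).sc n).f.hom := by
  cases n with
  | zero =>
    have d_eq_zero : ((P.complex.linearYonedaObj R Y).sc 0).f = 0 :=
      (P.complex.linearYonedaObj R Y).shape ((ComplexShape.up ℕ).prev 0) 0 (Nat.succ_ne_zero _)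
    rw [extMk_degree_zero_eq_zero_iff, d_eq_zero]
    exact ⟨fun h => ⟨0, h.symm⟩, fun ⟨_, h⟩ => h.symm⟩
  | succ p =>
    rw [P.extMk_eq_zero_iff f m hm hf ((ComplexShape.up ℕ).prev (p + 1)) (by simp)]
    rfl

variable (R Y n) in
/-- The map sending an `n`-cocycle of `Hom(P, Y)`, for a projective resolution `P` of `X`, to its
class in `Abelian.Ext X Y n`. -/
noncomputable def cocyclesToExt :
    LinearMap.ker ((P.complex.linearYonedaObj R Y).sc n).g.hom →ₗ[R] Abelian.Ext X Y n where
  toFun f := P.extMk f.1 ((ComplexShape.up ℕ).next n) (by simp) f.2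
  map_add' f g := (P.add_extMk ..).symm
  map_smul' r f := (smul_extMk P r ..).symm

lemma cocyclesToExt_surjective : Function.Surjective (cocyclesToExt R Y P n) := by
  intro α
  obtain ⟨f, hf, rfl⟩ := P.extMk_surjective α ((ComplexShape.up ℕ).next n) (by simp)
  exact ⟨⟨f, hf⟩, rfl⟩

lemma ker_cocyclesToExt :
    LinearMap.ker (cocyclesToExt R Y P n) =
      LinearMap.range ((P.complex.linearYonedaObj R Y).sc n).moduleCatToCycles := by
  ext f
  exact (extMk_eq_zero_iff_mem_range R P f.1 _ (by simp) f.2).trans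
    ⟨fun ⟨g, hg⟩ => ⟨g, Subtype.ext hg⟩, fun ⟨g, hg⟩ => ⟨g, congrArg Subtype.val hg⟩⟩

variable (R X Y n) in
/-- The comparison between the derived functor `Ext R C n`, computed from projective resolutions,
and `Abelian.Ext`, defined by morphisms in the derived category. -/
noncomputable def derivedExtEquivAbelianExt [EnoughProjectives C] :
    ((Ext R C n).obj (Opposite.op X)).obj Y ≃ₗ[R] Abelian.Ext X Y n :=
  let P := projectiveResolution X
  (P.isoExt n Y).toLinearEquiv ≪≫ₗ
    ((P.complex.linearYonedaObj R Y).sc n).moduleCatHomologyIso.toLinearEquiv ≪≫ₗ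
    Submodule.quotEquivOfEq _ _ (ker_cocyclesToExt P).symm ≪≫ₗ
    (cocyclesToExt R Y P n).quotKerEquivOfSurjective (cocyclesToExt_surjective P)

end DerivedFunctorComparison

section DimensionShift

open scoped Pointwise

variable {C : Type u} [Category.{v} C] [Abelian C] [HasExt.{w} C]
  (R : Type t) [CommRing R] [Linear R C]

/-- Contravariant functoriality of `Abelian.Ext` along an isomorphism. -/
noncomputable def extPrecompEquivOfIso {X X' : C} (e : X ≅ X') (Y : C) (n : ℕ) :
    Abelian.Ext X' Y n ≃ₗ[R] Abelian.Ext X Y n :=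
  LinearEquiv.ofLinearMap ((Abelian.Ext.mk₀ e.hom).precompOfLinear R Y (zero_add n))
    ((Abelian.Ext.mk₀ e.inv).precompOfLinear R Y (zero_add n)) (by ext; simp) (by ext; simp)

lemma range_precomp_smul_id (r : R) (X Y : C) (n : ℕ) :
    LinearMap.range ((Abelian.Ext.mk₀ (r • 𝟙 X)).precompOfLinear R Y (zero_add n)) =
      r • (⊤ : Submodule R (Abelian.Ext X Y n)) := by
  ext x
  simp [Submodule.mem_smul_pointwise_iff_exists, Abelian.Ext.mk₀_smul]

variable {S : ShortComplex C} (hS : S.ShortExact) (Y : C) (n : ℕ)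

lemma ker_extClass_precomp :
    LinearMap.ker (hS.extClass.precompOfLinear R Y (add_comm 1 n)) =
      LinearMap.range ((Abelian.Ext.mk₀ S.f).precompOfLinear R Y (zero_add n)) := by
  ext x
  constructor
  · exact Abelian.Ext.contravariant_sequence_exact₁ hS Y x (add_comm 1 n)
  · rintro ⟨y, rfl⟩
    exact hS.extClass_comp_assoc y (h := add_comm 1 n)

/-- Dimension shifting: the connecting map `Extⁿ(X₁, Y) → Extⁿ⁺¹(X₃, Y)` of a short exact sequence
induces an isomorphism on the cokernel of `Extⁿ(X₂, Y) → Extⁿ(X₁, Y)` when `Extⁿ⁺¹(X₂, Y)` vanishes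
for dimension reasons. -/
noncomputable def extShiftEquiv [HasProjectiveDimensionLE S.X₂ n] :
    (Abelian.Ext S.X₁ Y n ⧸
        LinearMap.range ((Abelian.Ext.mk₀ S.f).precompOfLinear R Y (zero_add n))) ≃ₗ[R]
      Abelian.Ext S.X₃ Y (n + 1) :=
  Submodule.quotEquivOfEq _ _ (ker_extClass_precomp R hS Y n).symm ≪≫ₗ
    LinearMap.quotKerEquivOfSurjective _ fun x =>
      Abelian.Ext.contravariant_sequence_exact₃ hS Y x
        (Abelian.Ext.eq_zero_of_hasProjectiveDimensionLT _ (n + 1) le_rfl) (add_comm 1 n)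

end DimensionShift

section ModuleExt

open RingTheory.Sequence

lemma hasProjectiveDimensionLE_quotSMulTop {R : Type u} [CommRing R] {A : ModuleCat.{v} R} {r : R}
    (hr : IsSMulRegular A r) (n : ℕ) [hA : HasProjectiveDimensionLE A n] :
    HasProjectiveDimensionLE (ModuleCat.of R (QuotSMulTop r A)) (n + 1) :=
  hr.smulShortComplex_shortExact.hasProjectiveDimensionLT_X₃ (n + 1) hA
    (hasProjectiveDimensionLT_of_ge A (n + 1) (n + 2) (Nat.le_succ _))

/-- The isomorphism `M/IM ≃ N/IN` induced by `M ≃ N`. -/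
def quotIdealSMulTopCongr {R M N : Type*} [CommRing R] [AddCommGroup M] [AddCommGroup N]
    [Module R M] [Module R N] (I : Ideal R) (e : M ≃ₗ[R] N) :
    (M ⧸ (I • ⊤ : Submodule R M)) ≃ₗ[R] N ⧸ (I • ⊤ : Submodule R N) :=
  Submodule.Quotient.equiv _ _ e
    (by rw [Submodule.map_smul'', Submodule.map_top, LinearEquiv.range])

/-- The isomorphism `M/IM ≃ M` for the ideal `I` generated by the empty list. -/
def quotOfListNilEquiv (R M : Type*) [CommRing R] [AddCommGroup M] [Module R M] :
    (M ⧸ (Ideal.ofList ([] : List R) • ⊤ : Submodule R M)) ≃ₗ[R] M :=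
  Submodule.quotEquivOfEqBot _ (by rw [Ideal.ofList_nil, Submodule.bot_smul])

variable {R : Type u} [CommRing R] [Small.{v} R]

/-- Dimension shifting along `0 ⟶ A ⟶ A ⟶ A/rA ⟶ 0`. -/
noncomputable def quotSMulTopExtEquiv {A : ModuleCat.{v} R} {r : R} (hr : IsSMulRegular A r)
    (M : ModuleCat.{v} R) (n : ℕ) [hA : HasProjectiveDimensionLE A n] :
    QuotSMulTop r (Abelian.Ext A M n) ≃ₗ[R]
      Abelian.Ext (ModuleCat.of R (QuotSMulTop r A)) M (n + 1) :=
  have : HasProjectiveDimensionLE (A.smulShortComplex r).X₂ n := hA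
  Submodule.quotEquivOfEq _ _ (range_precomp_smul_id R r A M n).symm ≪≫ₗ
    extShiftEquiv R hr.smulShortComplex_shortExact M n

theorem nonempty_ext_quot_ofList_equiv {A : Type v} [AddCommGroup A] [Module R A] {rs : List R}
    (hrs : IsWeaklyRegular A rs) (M : ModuleCat.{v} R) {n m : ℕ} (hm : n + rs.length = m)
    [HasProjectiveDimensionLE (ModuleCat.of R A) n] :
    Nonempty (Abelian.Ext (ModuleCat.of R (A ⧸ (Ideal.ofList rs • ⊤ : Submodule R A))) M m ≃ₗ[R]
      Abelian.Ext (ModuleCat.of R A) M n ⧸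
        (Ideal.ofList rs • ⊤ : Submodule R (Abelian.Ext (ModuleCat.of R A) M n))) := by
  induction hrs generalizing n with
  | nil A =>
    obtain rfl : n = m := hm
    exact ⟨extPrecompEquivOfIso R (quotOfListNilEquiv R A).symm.toModuleIso M n ≪≫ₗ
      (quotOfListNilEquiv R _).symm⟩
  | @cons A _ _ r rs hr _ ih =>
    have := hasProjectiveDimensionLE_quotSMulTop (A := ModuleCat.of R A) hr n
    obtain ⟨e⟩ := ih (n := n + 1) (by rw [← hm, List.length_cons]; ring)
    exact ⟨extPrecompEquivOfIso R
        (Submodule.quotOfListConsSMulTopEquivQuotSMulTopInner A r rs).symm.toModuleIso M m ≪≫ₗ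
      e ≪≫ₗ
      quotIdealSMulTopCongr _ (quotSMulTopExtEquiv (A := ModuleCat.of R A) hr M n).symm ≪≫ₗ
      (Submodule.quotOfListConsSMulTopEquivQuotSMulTopInner _ r rs).symm⟩

/-- The isomorphism `Ext⁰(R, M) ≃ M`. -/
noncomputable def extZeroSelfEquiv (R : Type u) [CommRing R] (M : ModuleCat.{u} R) :
    Abelian.Ext (ModuleCat.of R R) M 0 ≃ₗ[R] M :=
  Abelian.Ext.linearEquiv₀ ≪≫ₗ ModuleCat.homLinearEquiv (S := R) ≪≫ₗ
    LinearMap.ringLmapEquivSelf R R M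

theorem nonempty_ext_self_quot_ofList_equiv {R : Type u} [CommRing R] {rs : List R}
    (hrs : IsWeaklyRegular R rs) (M : ModuleCat.{u} R) :
    Nonempty (Abelian.Ext (ModuleCat.of R (R ⧸ Ideal.ofList rs)) M rs.length ≃ₗ[R]
      M ⧸ (Ideal.ofList rs • ⊤ : Submodule R M)) := by
  have hR : HasProjectiveDimensionLE (ModuleCat.of R R) 0 :=
    inferInstanceAs (HasProjectiveDimensionLT (ModuleCat.of R R) 1)
  obtain ⟨shift⟩ := nonempty_ext_quot_ofList_equiv hrs M (zero_add rs.length)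
  have smul_top_eq : (Ideal.ofList rs • ⊤ : Ideal R) = Ideal.ofList rs := by
    rw [smul_eq_mul, Ideal.mul_top]
  exact ⟨extPrecompEquivOfIso R (Submodule.quotEquivOfEq _ _ smul_top_eq).toModuleIso M _ ≪≫ₗ
    shift ≪≫ₗ quotIdealSMulTopCongr _ (extZeroSelfEquiv R M)⟩

end ModuleExt

section OfFn

open RingTheory.Sequence

variable {R : Type*} [CommRing R] {n : ℕ} (f : Fin n → R)

lemma idealOfList_ofFn : Ideal.ofList (List.ofFn f) = Ideal.span (Set.range f) :=
  congrArg Ideal.span (Set.ext fun _ => List.mem_ofFn' f _)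

lemma idealOfList_take_ofFn (i : Fin n) :
    Ideal.ofList ((List.ofFn f).take i) = Ideal.span (f '' {j | j < i}) := by
  refine congrArg Ideal.span (Set.ext fun x => ?_)
  simp only [Set.mem_ofPred_eq, List.mem_take_iff_getElem, List.length_ofFn, List.getElem_ofFn,
    Set.mem_image]
  constructor
  · rintro ⟨j, hj, rfl⟩
    exact ⟨⟨j, by lia⟩, by rw [Fin.lt_def]; lia, rfl⟩
  · rintro ⟨j, hj, rfl⟩
    exact ⟨j, by lia, rfl⟩

lemma isWeaklyRegular_ofFn_iff (M : Type*) [AddCommGroup M] [Module R M] :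
    IsWeaklyRegular M (List.ofFn f) ↔ ∀ i : Fin n,
      IsSMulRegular (M ⧸ (Ideal.span (f '' {j | j < i}) • ⊤ : Submodule R M)) (f i) := by
  simp only [isWeaklyRegular_iff, Fin.forall_iff, List.length_ofFn, List.getElem_ofFn]
  exact forall₂_congr fun i hi => by rw [idealOfList_take_ofFn f ⟨i, hi⟩]

end OfFn

/-- If `f₁, …, fₙ` is a regular sequence in a commutative ring `R` (each `fᵢ` is a
nonzerodivisor on `R/(f₁,…,f_{i-1})` and the ideal `(f₁,…,fₙ)` is proper), then for every
`R`-module `M` there is an isomorphism of `R`-modules `Extⁿ_R(R/I, M) ≅ M/IM`, where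
`I = (f₁,…,fₙ)`. -/
theorem ext_of_regular_sequence_iso_quotient
    {R : Type u} [CommRing R] {n : ℕ} (f : Fin n → R)
    (hreg : ∀ i : Fin n, ∀ x : R ⧸ Ideal.span (f '' {j | j < i}), f i • x = 0 → x = 0)
    (hproper : Ideal.span (Set.range f) ≠ ⊤)
    (M : Type u) [AddCommGroup M] [Module R M] :
    Nonempty
      ((((Ext R (ModuleCat.{u} R) n).obj
            (Opposite.op (ModuleCat.of R (R ⧸ Ideal.span (Set.range f))))).obj
          (ModuleCat.of R M)) ≃ₗ[R]
        (M ⧸ (Ideal.span (Set.range f) • (⊤ : Submodule R M)))) := by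
  have hweak : RingTheory.Sequence.IsWeaklyRegular R (List.ofFn f) := by
    rw [isWeaklyRegular_ofFn_iff]
    intro i
    rw [smul_eq_mul, Ideal.mul_top]
    exact .of_right_eq_zero_of_smul (hreg i)
  obtain ⟨e⟩ := nonempty_ext_self_quot_ofList_equiv hweak (ModuleCat.of R M)
  rw [idealOfList_ofFn, List.length_ofFn] at e
  exact ⟨derivedExtEquivAbelianExt R _ _ n ≪≫ₗ e⟩
end

section
/- Let p be a prime, let R be a commutative ring of characteristic p, and let (M, κ) be an R-module with a Cartier structure. Let f_1, …, f_n ∈ R and I = (f_1,…,f_n). Then for every m ∈ I·M one has κ((f_1⋯f_n)^{p−1} • m) ∈ I·M; consequently the formula κ̄(m + I·M) = κ((f_1⋯f_n)^{p−1} • m) + I·M defines an additive map κ̄ on M/IM satisfying κ̄(r^p • x) = r • κ̄(x) for all r ∈ R and x ∈ M/IM, i.e. a Cartier structure on the R/I-module M/IM. -/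
/-!
Write `I^[p]` for the ideal generated by the `p`-th powers of elements of `I`. Since
`κ (a ^ p • m) = a • κ m`, the map `κ` sends `I^[p]·M` into `I·M`, so `κ (s • ·)` preserves `I·M`
as soon as `s·I ⊆ I^[p]`. If `b` is a common multiple of generators of `I`, then `s = b ^ (p - 1)`
has this property, because `a ^ p = a ^ (p - 1) * a` divides `b ^ (p - 1) * a` whenever `a ∣ b`.
-/

theorem pow_dvd_pow_sub_one_mul_of_dvd {α : Type*} [CommMonoid α] {p : ℕ} (hp : p ≠ 0) {a b : α}
    (hab : a ∣ b) : a ^ p ∣ b ^ (p - 1) * a := by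
  rw [← pow_sub_one_mul hp a]
  exact mul_dvd_mul_right (pow_dvd_pow_of_dvd hab _) a

section FrobeniusPower

variable {R : Type*} [CommSemiring R] {p : ℕ}

/-- The Frobenius power `I^[p]`, spanned by the `p`-th powers of all elements of `I`. In
characteristic `p` this is the extension of `I` along the Frobenius; the definition makes sense for
every exponent. -/
def frobeniusPower (I : Ideal R) (p : ℕ) : Ideal R :=
  Ideal.span ((· ^ p) '' (I : Set R))

theorem pow_mem_frobeniusPower {I : Ideal R} {a : R} (ha : a ∈ I) : a ^ p ∈ frobeniusPower I p :=
  Ideal.subset_span ⟨a, ha, rfl⟩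

theorem pow_sub_one_mem_colon_frobeniusPower_span (hp : p ≠ 0) {S : Set R} {b : R}
    (hb : ∀ a ∈ S, a ∣ b) :
    b ^ (p - 1) ∈ (frobeniusPower (Ideal.span S) p).colon (Ideal.span S : Set R) := by
  rw [Submodule.colon_span, Submodule.mem_colon]
  intro a ha
  exact Ideal.mem_of_dvd _ (pow_dvd_pow_sub_one_mul_of_dvd hp (hb a ha))
    (pow_mem_frobeniusPower (Ideal.subset_span ha))

end FrobeniusPower

/-- An additive endomorphism `κ` is a Cartier structure for the exponent `p` if it is
`p⁻¹`-linear; the exponent `p` may be any natural number. -/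
def IsCartier (R : Type*) {M : Type*} [Monoid R] [AddMonoid M] [DistribMulAction R M] (p : ℕ)
    (κ : M →+ M) : Prop :=
  ∀ (r : R) (m : M), κ (r ^ p • m) = r • κ m

namespace IsCartier

theorem comp_smul {R M : Type*} [CommMonoid R] [AddMonoid M] [DistribMulAction R M] {p : ℕ}
    {κ : M →+ M} (hκ : IsCartier R p κ) (s : R) :
    IsCartier R p (κ.comp (DistribSMul.toAddMonoidHom M s)) := fun r m => by
  simp only [AddMonoidHom.comp_apply, DistribSMul.toAddMonoidHom_apply]
  rw [smul_comm, hκ]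

section Semiring

variable {R M : Type*} [CommSemiring R] [AddCommMonoid M] [Module R M] {p : ℕ} {κ : M →+ M}
  {I : Ideal R}

theorem map_smul_mem_of_mem_frobeniusPower (hκ : IsCartier R p κ) {a : R}
    (ha : a ∈ frobeniusPower I p) (m : M) : κ (a • m) ∈ I • (⊤ : Submodule R M) := by
  induction ha using Submodule.span_induction generalizing m with
  | mem _ hx =>
    obtain ⟨a, ha, rfl⟩ := hx
    rw [hκ]
    exact Submodule.smul_mem_smul ha Submodule.mem_top
  | zero => simp
  | add a b _ _ iha ihb =>
    rw [add_smul, map_add]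
    exact add_mem (iha m) (ihb m)
  | smul c a _ iha =>
    rw [smul_eq_mul, mul_comm, mul_smul]
    exact iha (c • m)

theorem map_smul_mem_of_mem_colon (hκ : IsCartier R p κ) {s : R}
    (hs : s ∈ (frobeniusPower I p).colon (I : Set R)) {m : M}
    (hm : m ∈ I • (⊤ : Submodule R M)) : κ (s • m) ∈ I • (⊤ : Submodule R M) := by
  induction hm using Submodule.smul_induction_on' with
  | smul a ha m _ =>
    rw [← mul_smul]
    exact hκ.map_smul_mem_of_mem_frobeniusPower (Submodule.mem_colon.mp hs a ha) m
  | add x _ y _ ihx ihy =>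
    rw [smul_add, map_add]
    exact add_mem ihx ihy

end Semiring

theorem exists_quotient {R M : Type*} [Ring R] [AddCommGroup M] [Module R M] {p : ℕ} {κ : M →+ M}
    (hκ : IsCartier R p κ) {N : Submodule R M} (hN : ∀ m ∈ N, κ m ∈ N) :
    ∃ κ' : M ⧸ N →+ M ⧸ N, IsCartier R p κ' ∧
      ∀ m : M, κ' (Submodule.Quotient.mk m) = Submodule.Quotient.mk (κ m) := by
  refine ⟨QuotientAddGroup.map N.toAddSubgroup N.toAddSubgroup κ hN, fun r x => ?_, fun _ => rfl⟩
  obtain ⟨m, rfl⟩ := Submodule.Quotient.mk_surjective N x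
  exact congrArg Submodule.Quotient.mk (hκ r m)

end IsCartier

theorem cartier_structure_on_quotient_general
    {p : ℕ} {R M : Type*} [CommRing R] [AddCommGroup M] [Module R M]
    (κ : M → M) (hadd : ∀ x y : M, κ (x + y) = κ x + κ y)
    (hsemi : ∀ (r : R) (m : M), κ (r ^ p • m) = r • κ m)
    {I : Ideal R} {s : R} (hs : s ∈ (frobeniusPower I p).colon (I : Set R)) :
    (∀ m ∈ (I • ⊤ : Submodule R M), κ (s • m) ∈ (I • ⊤ : Submodule R M)) ∧
    ∃ κ' : (M ⧸ (I • ⊤ : Submodule R M)) → (M ⧸ (I • ⊤ : Submodule R M)),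
      (∀ x y, κ' (x + y) = κ' x + κ' y) ∧
      (∀ (r : R) (x : M ⧸ (I • ⊤ : Submodule R M)), κ' (r ^ p • x) = r • κ' x) ∧
      (∀ m : M, κ' (Submodule.Quotient.mk m) = Submodule.Quotient.mk (κ (s • m))) := by
  have hκ : IsCartier R p (AddMonoidHom.mk' κ hadd) := hsemi
  have hstable : ∀ m ∈ (I • ⊤ : Submodule R M), κ (s • m) ∈ (I • ⊤ : Submodule R M) :=
    fun _ => hκ.map_smul_mem_of_mem_colon hs
  obtain ⟨κ', hκ', hmk⟩ := (hκ.comp_smul s).exists_quotient hstable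
  exact ⟨hstable, κ', map_add κ', hκ', hmk⟩

/-- Let `R` be a commutative ring of prime characteristic `p` and `(M, κ)` an `R`-module with a
Cartier structure (an additive map `κ` with `κ (r^p • m) = r • κ m`).  For `f₁, …, fₙ ∈ R` and
`I = (f₁, …, fₙ)`, the map `κ ((f₁⋯fₙ)^(p-1) • ·)` preserves `I·M`, and hence descends to a
Cartier structure on the `R/I`-module `M/IM`. -/
theorem cartier_structure_on_quotient
    (p : ℕ) (hp : p.Prime) (R : Type*) [CommRing R] [CharP R p]
    (M : Type*) [AddCommGroup M] [Module R M]
    (κ : M → M) (hadd : ∀ x y : M, κ (x + y) = κ x + κ y)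
    (hsemi : ∀ (r : R) (m : M), κ (r ^ p • m) = r • κ m)
    (n : ℕ) (f : Fin n → R) :
    (∀ m ∈ (Ideal.span (Set.range f) • ⊤ : Submodule R M),
        κ ((∏ i, f i) ^ (p - 1) • m) ∈ (Ideal.span (Set.range f) • ⊤ : Submodule R M)) ∧
    ∃ κ' : (M ⧸ (Ideal.span (Set.range f) • ⊤ : Submodule R M)) →
           (M ⧸ (Ideal.span (Set.range f) • ⊤ : Submodule R M)),
      (∀ x y, κ' (x + y) = κ' x + κ' y) ∧
      (∀ (r : R) (x : M ⧸ (Ideal.span (Set.range f) • ⊤ : Submodule R M)),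
        κ' (r ^ p • x) = r • κ' x) ∧
      (∀ m : M, κ' (Submodule.Quotient.mk m)
          = Submodule.Quotient.mk (κ ((∏ i, f i) ^ (p - 1) • m))) :=
  cartier_structure_on_quotient_general κ hadd hsemi <|
    pow_sub_one_mem_colon_frobeniusPower_span hp.ne_zero <|
      Set.forall_mem_range.mpr fun i => Finset.dvd_prod_of_mem f (Finset.mem_univ i)
end

section
/- Let k be a perfect field of characteristic p > 0, R = k[x_1,…,x_n], and let κ : R → R be the Cartier operator. Then for every additive map φ : R → R satisfying φ(f^p·g) = f·φ(g) for all f, g ∈ R, there exists a unique h ∈ R such that φ(g) = κ(h·g) for all g ∈ R. -/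
open MvPolynomial

/-!
For exponents `0 ≤ aᵢ < p`, the monomials `x^a` and `x^(p-1-a)` form dual families for the pairing
`(f, g) ↦ κ (f * g)`. Since the coefficients have `p`-th roots, every polynomial is therefore
recovered from its pairings, `g = ∑ₐ κ (g * x^(p-1-a)) ^ p * x^a`. Applying `φ` to this expansion
gives `φ g = ∑ₐ κ (g * x^(p-1-a)) * φ (x^a)`, which is `κ (h * g)` for
`h = ∑ₐ φ (x^a) ^ p * x^(p-1-a)`. Applied to `h` itself, the expansion shows that the values
`κ (h * g)` determine `h`.
-/

/-- A `p⁻¹`-linear endomorphism `φ` of a commutative semiring `R`: an additive map with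
`φ (f ^ p * g) = f * φ g`. When `R` has characteristic `p`, these are the `R`-linear maps
`F_*R → R`, where `F` is the Frobenius endomorphism. -/
structure IsCartierLinear {R : Type*} [CommSemiring R] (p : ℕ) (φ : R → R) : Prop where
  map_add : ∀ f g, φ (f + g) = φ f + φ g
  map_pow_mul : ∀ f g, φ (f ^ p * g) = f * φ g

namespace IsCartierLinear

variable {R ι : Type*} [CommSemiring R] {p : ℕ} {κ φ : R → R}

lemma map_zero (hφ : IsCartierLinear p φ) : φ 0 = 0 := by
  simpa using hφ.map_pow_mul 0 0

lemma map_sum (hφ : IsCartierLinear p φ) (s : Finset ι) (f : ι → R) :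
    φ (∑ i ∈ s, f i) = ∑ i ∈ s, φ (f i) :=
  _root_.map_sum (⟨⟨φ, hφ.map_zero⟩, hφ.map_add⟩ : R →+ R) f s

theorem existsUnique_eq_map_mul [Fintype ι] (hκ : IsCartierLinear p κ) {u v : ι → R}
    (hκuv : ∀ g, ∑ i, κ (g * v i) ^ p * u i = g) (hφ : IsCartierLinear p φ) :
    ∃! h : R, ∀ g, φ g = κ (h * g) := by
  refine existsUnique_of_exists_of_unique
    ⟨∑ i, φ (u i) ^ p * v i, fun g => ?_⟩ fun h₁ h₂ hh₁ hh₂ => ?_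
  · calc
      φ g = φ (∑ i, κ (g * v i) ^ p * u i) := by rw [hκuv]
      _ = ∑ i, κ (g * v i) * φ (u i) := by simp only [hφ.map_sum, hφ.map_pow_mul]
      _ = κ (∑ i, φ (u i) ^ p * (g * v i)) := by
        simp only [hκ.map_sum, hκ.map_pow_mul, mul_comm (φ _)]
      _ = κ ((∑ i, φ (u i) ^ p * v i) * g) := by
        simp only [Finset.sum_mul, mul_assoc, mul_comm g]
  · rw [← hκuv h₁, ← hκuv h₂]
    simp only [← hh₁, ← hh₂]

end IsCartierLinear

section ReducedMonomial

variable {σ : Type*} [Fintype σ] (k : Type*) [CommSemiring k] {p : ℕ}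

/-- The monomial `x^a` all of whose exponents are less than `p`; these monomials form a basis of
`k[x]` over its subring of `p`-th powers when `k` is perfect of characteristic `p`. The bound on
the exponents is built into the type, so that `fun i => (a i).rev` is the complementary exponent
vector `p - 1 - a`. -/
noncomputable def reducedMonomial (a : σ → Fin p) : MvPolynomial σ k :=
  ∏ i, X i ^ (a i : ℕ)

lemma prod_X_pow_eq_pow_mul_reducedMonomial [NeZero p] (e : σ → ℕ) :
    (∏ i, X i ^ e i : MvPolynomial σ k) =
      (∏ i, X i ^ (e i / p)) ^ p * reducedMonomial k fun i => Fin.ofNat p (e i) := by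
  simp only [reducedMonomial, Fin.val_ofNat, ← Finset.prod_pow, ← Finset.prod_mul_distrib,
    ← pow_mul, ← pow_add, Nat.div_add_mod']

lemma reducedMonomial_mul_reducedMonomial (a b : σ → Fin p) :
    reducedMonomial k a * reducedMonomial k b = ∏ i, X i ^ (a i + b i : ℕ) := by
  simp only [reducedMonomial, ← Finset.prod_mul_distrib, ← pow_add]

variable {k}

lemma exists_monomial_eq_pow_mul_reducedMonomial [NeZero p]
    (hk : Function.Surjective fun c : k => c ^ p) (m : σ →₀ ℕ) (s : k) :
    ∃ (f : MvPolynomial σ k) (a : σ → Fin p), monomial m s = f ^ p * reducedMonomial k a := by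
  obtain ⟨t, rfl⟩ := hk s
  refine ⟨C t * ∏ i, X i ^ (m i / p), fun i => Fin.ofNat p (m i), ?_⟩
  rw [mul_pow, mul_assoc, ← prod_X_pow_eq_pow_mul_reducedMonomial, monomial_eq, C_pow,
    Finsupp.prod_fintype _ _ fun i => pow_zero (X i)]

end ReducedMonomial

lemma fin_eq_of_add_rev_mod_eq {p : ℕ} {a b : Fin p} (h : (a + b.rev : ℕ) % p = p - 1) :
    a = b := by
  obtain ⟨a, ha⟩ := a
  obtain ⟨b, hb⟩ := b
  simp only [Fin.val_rev, Fin.mk.injEq] at h ⊢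
  rcases lt_or_ge (a + (p - (b + 1))) p with hlt | hge
  · rw [Nat.mod_eq_of_lt hlt] at h
    omega
  · rw [Nat.mod_eq_sub_mod hge, Nat.mod_eq_of_lt (by omega)] at h
    omega

/-- `κ` is the Cartier operator on `k[x]`, for a finite family `x` of variables: the `p⁻¹`-linear
map sending `x^(p-1)` to `1` and all other monomials with exponents at most `p - 1` to `0`. -/
structure IsCartierOperator {σ k : Type*} [Fintype σ] [CommSemiring k] (p : ℕ)
    (κ : MvPolynomial σ k → MvPolynomial σ k) : Prop extends IsCartierLinear p κ where
  map_prod_X_pow_eq_one : κ ((∏ i, X i) ^ (p - 1)) = 1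
  map_prod_X_pow_eq_zero : ∀ a : σ → ℕ, (∀ i, a i ≤ p - 1) → a ≠ (fun _ => p - 1) →
    κ (∏ i, X i ^ a i) = 0

namespace IsCartierOperator

variable {σ k : Type*} [Fintype σ] [CommSemiring k] {p : ℕ}
  {κ : MvPolynomial σ k → MvPolynomial σ k}

lemma map_reducedMonomial_mul_rev_self (hκ : IsCartierOperator p κ) (a : σ → Fin p) :
    κ (reducedMonomial k a * reducedMonomial k fun i => (a i).rev) = 1 := by
  have hadd : ∀ i, (a i + (a i).rev : ℕ) = p - 1 := fun i => by
    rw [Fin.val_rev]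
    omega
  simp only [reducedMonomial_mul_reducedMonomial, hadd, Finset.prod_pow,
    hκ.map_prod_X_pow_eq_one]

lemma map_reducedMonomial_mul_rev_of_ne [NeZero p] (hκ : IsCartierOperator p κ)
    {a b : σ → Fin p} (hab : a ≠ b) :
    κ (reducedMonomial k a * reducedMonomial k fun i => (b i).rev) = 0 := by
  rw [reducedMonomial_mul_reducedMonomial, prod_X_pow_eq_pow_mul_reducedMonomial k (p := p),
    hκ.map_pow_mul, reducedMonomial, hκ.map_prod_X_pow_eq_zero, mul_zero]
  · exact fun i => Nat.le_sub_one_of_lt (Fin.is_lt _)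
  · exact fun h => hab (funext fun i => fin_eq_of_add_rev_mod_eq (congrFun h i))

theorem sum_map_mul_rev_pow_mul_reducedMonomial [DecidableEq σ] [ExpChar k p]
    (hk : Function.Surjective (frobenius k p)) (hκ : IsCartierOperator p κ)
    (g : MvPolynomial σ k) :
    ∑ a : σ → Fin p, κ (g * reducedMonomial k fun i => (a i).rev) ^ p * reducedMonomial k a =
      g := by
  have : NeZero p := ⟨expChar_ne_zero k p⟩
  induction g using MvPolynomial.induction_on' with
  | monomial m s =>
    obtain ⟨f, b, hfb⟩ := exists_monomial_eq_pow_mul_reducedMonomial hk m s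
    simp only [hfb, mul_assoc, hκ.map_pow_mul]
    rw [Finset.sum_eq_single b]
    · rw [hκ.map_reducedMonomial_mul_rev_self, mul_one]
    · intro a _ hab
      rw [hκ.map_reducedMonomial_mul_rev_of_ne hab.symm, mul_zero, zero_pow (NeZero.ne p),
        zero_mul]
    · exact fun hb => absurd (Finset.mem_univ b) hb
  | add f g hf hg =>
    simp only [add_mul, hκ.map_add, add_pow_expChar, Finset.sum_add_distrib, hf, hg]

end IsCartierOperator

theorem cartier_operator_generates_general {σ k : Type*} [Fintype σ] [CommSemiring k] {p : ℕ}
    [ExpChar k p] (hk : Function.Surjective (frobenius k p))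
    {κ φ : MvPolynomial σ k → MvPolynomial σ k} (hκ : IsCartierOperator p κ)
    (hφ : IsCartierLinear p φ) :
    ∃! h : MvPolynomial σ k, ∀ g, φ g = κ (h * g) := by
  classical
  exact hκ.toIsCartierLinear.existsUnique_eq_map_mul
    (hκ.sum_map_mul_rev_pow_mul_reducedMonomial hk) hφ

/-- Let `κ` be the Cartier operator on `R = k[x₁,…,xₙ]` over a perfect field `k` of
characteristic `p > 0`.  Every additive map `φ : R → R` with `φ (f^p * g) = f * φ g` is of the
form `φ = κ (h * ·)` for a unique `h ∈ R`. -/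
theorem cartier_operator_generates
    (p : ℕ) (hp : p.Prime) (k : Type*) [Field k] [CharP k p] [PerfectField k] (n : ℕ)
    (κ : MvPolynomial (Fin n) k → MvPolynomial (Fin n) k)
    (hadd : ∀ f g, κ (f + g) = κ f + κ g)
    (hsemi : ∀ f g, κ (f ^ p * g) = f * κ g)
    (hone : κ ((∏ i, X i) ^ (p - 1)) = 1)
    (hzero : ∀ a : Fin n → ℕ, (∀ i, a i ≤ p - 1) → a ≠ (fun _ => p - 1) →
      κ (∏ i, X i ^ a i) = 0)
    (φ : MvPolynomial (Fin n) k → MvPolynomial (Fin n) k)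
    (hφa : ∀ f g, φ (f + g) = φ f + φ g)
    (hφs : ∀ f g, φ (f ^ p * g) = f * φ g) :
    ∃! h : MvPolynomial (Fin n) k, ∀ g, φ g = κ (h * g) := by
  have : ExpChar k p := ExpChar.prime hp
  have : PerfectRing k p := PerfectField.toPerfectRing p
  exact cartier_operator_generates_general (surjective_frobenius k p)
    ⟨⟨hadd, hsemi⟩, hone, hzero⟩ ⟨hφa, hφs⟩
end

section
/- Let p be a prime, R a commutative ring of characteristic p, ω an R-module equipped with a Cartier structure κ_ω, and N an arbitrary R-module. Then: (i) there is a well-defined additive map Φ : (F*N) ⊗_R ω → N ⊗_R ω determined by Φ((r ⊗ n) ⊗ x) = n ⊗ κ_ω(r • x); and (ii) for every R-linear map γ : N → F*N, the composite K = Φ ∘ (γ ⊗ id_ω) : N ⊗_R ω → N ⊗_R ω is a Cartier structure on N ⊗_R ω, i.e. K is additive and K(r^p • y) = r • K(y) for all r ∈ R and y ∈ N ⊗_R ω. -/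
open scoped TensorProduct

/-- The base ring for Frobenius base change: `R` itself, as the source of the Frobenius. -/
def FrobBase (_p : ℕ) (R : Type u) : Type u := R

instance (p : ℕ) (R : Type*) [CommRing R] : CommRing (FrobBase p R) :=
  inferInstanceAs (CommRing R)

section Frob

variable (p : ℕ) (R : Type*) [CommRing R] [Fact p.Prime] [CharP R p]

/-- The Frobenius ring endomorphism `r ↦ r ^ p` of `R`. -/
def frobPow : R →+* R where
  toFun r := r ^ p
  map_one' := one_pow p
  map_mul' a b := mul_pow a b p
  map_zero' := zero_pow (Fact.out (p := p.Prime)).ne_zero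
  map_add' a b := add_pow_char a b p

/-- The Frobenius, viewed as a ring homomorphism `FrobBase p R →+* R`. -/
def frobHom : FrobBase p R →+* R := frobPow p R

/-- `FrobBase p R` acts on `R` through the Frobenius:  `a • r = a ^ p * r`. -/
noncomputable instance : Module (FrobBase p R) R := Module.compHom R (frobHom p R)

noncomputable instance : SMulCommClass (FrobBase p R) R R where
  smul_comm a r x := by
    show frobHom p R a * (r * x) = r * (frobHom p R a * x)
    ring

/-- `N`, viewed as a module over `FrobBase p R` via the identity of `R`. -/
def FrobRes (_p : ℕ) (R : Type*) (N : Type u) : Type u := N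

instance (N : Type*) [AddCommGroup N] : AddCommGroup (FrobRes p R N) :=
  inferInstanceAs (AddCommGroup N)

noncomputable instance (N : Type*) [AddCommGroup N] [Module R N] :
    Module (FrobBase p R) (FrobRes p R N) :=
  inferInstanceAs (Module R N)

/-- The identity map `N → FrobRes p R N`. -/
def FrobRes.of {N : Type*} (p : ℕ) (R : Type*) (n : N) : FrobRes p R N := n

/-- The Frobenius pullback `F^*N = R ⊗_{F,R} N`: the base change of `N` along the Frobenius
`F : R → R`, an `R`-module through the left tensor factor, subject to the relation
`(r * a ^ p) ⊗ n = r ⊗ (a • n)`. -/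
noncomputable def FrobPull (N : Type*) [AddCommGroup N] [Module R N] : Type _ :=
  TensorProduct (FrobBase p R) R (FrobRes p R N)

noncomputable instance (N : Type*) [AddCommGroup N] [Module R N] :
    AddCommGroup (FrobPull p R N) :=
  inferInstanceAs (AddCommGroup (TensorProduct (FrobBase p R) R (FrobRes p R N)))

noncomputable instance (N : Type*) [AddCommGroup N] [Module R N] :
    Module R (FrobPull p R N) :=
  inferInstanceAs (Module R (TensorProduct (FrobBase p R) R (FrobRes p R N)))

/-- The elementary tensor `r ⊗ n` in the Frobenius pullback `F^*N`. -/
noncomputable def FrobPull.tmul {N : Type*} [AddCommGroup N] [Module R N] (r : R) (n : N) :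
    FrobPull p R N :=
  r ⊗ₜ[FrobBase p R] (FrobRes.of p R n)

/-!
A Cartier structure on `ω` is the same thing as an `R`-linear map `F_*ω → ω`. The projection
formula `F^*N ⊗ ω ≃ N ⊗ F_*ω` followed by `N ⊗ κω` is the map `Φ`; being linear over the source of
the Frobenius, it satisfies `Φ (r ^ p • w) = r • Φ w`, and precomposing with the `R`-linear map
`γ ⊗ id` preserves this.
-/

section BaseChange

variable {A B N M : Type*} [CommSemiring A] [CommSemiring B] [Algebra A B]
  [AddCommMonoid N] [Module A N] [AddCommMonoid M] [Module B M]

theorem baseChange_tensor_addMonoidHom_ext {T : Type*} [AddCommMonoid T]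
    {f g : (B ⊗[A] N) ⊗[B] M →+ T}
    (h : ∀ (b : B) (n : N) (x : M), f ((b ⊗ₜ[A] n) ⊗ₜ[B] x) = g ((b ⊗ₜ[A] n) ⊗ₜ[B] x)) :
    f = g := by
  ext w
  induction w with
  | zero => rw [map_zero, map_zero]
  | add v w hv hw => rw [map_add, map_add, hv, hw]
  | tmul z x =>
    induction z with
    | zero => rw [TensorProduct.zero_tmul, map_zero, map_zero]
    | add y z hy hz => rw [TensorProduct.add_tmul, map_add, map_add, hy, hz]
    | tmul b n => exact h b n x

variable [Module A M] [IsScalarTower A B M]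

variable (A B N M) in
/-- The projection formula for the restriction of scalars of a `B`-module `M` to `A`, sending
`(b ⊗ n) ⊗ x` to `n ⊗ b • x`. -/
noncomputable def projectionFormula : (B ⊗[A] N) ⊗[B] M ≃ₗ[A] N ⊗[A] M :=
  (TensorProduct.comm B (B ⊗[A] N) M ≪≫ₗ
      TensorProduct.AlgebraTensorModule.cancelBaseChange A B B M N).restrictScalars A ≪≫ₗ
    TensorProduct.comm A M N

variable {P : Type*} [AddCommMonoid P] [Module A P]

/-- The projection formula followed by `N ⊗ κ`. For the Frobenius and a Cartier structure `κ`
this is the map `Φ`. -/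
noncomputable def projectionFormulaMap (κ : M →ₗ[A] P) : (B ⊗[A] N) ⊗[B] M →ₗ[A] N ⊗[A] P :=
  κ.lTensor N ∘ₗ (projectionFormula A B N M).toLinearMap

theorem projectionFormulaMap_tmul_tmul (κ : M →ₗ[A] P) (b : B) (n : N) (x : M) :
    projectionFormulaMap κ ((b ⊗ₜ[A] n) ⊗ₜ[B] x) = n ⊗ₜ[A] κ (b • x) :=
  rfl

theorem eq_projectionFormulaMap {κ : M →ₗ[A] P} {Φ : (B ⊗[A] N) ⊗[B] M →+ N ⊗[A] P}
    (hΦ : ∀ (b : B) (n : N) (x : M), Φ ((b ⊗ₜ[A] n) ⊗ₜ[B] x) = n ⊗ₜ[A] κ (b • x)) :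
    Φ = (projectionFormulaMap κ).toAddMonoidHom :=
  baseChange_tensor_addMonoidHom_ext hΦ

theorem projectionFormulaMap_algebraMap_smul (κ : M →ₗ[A] P) (a : A) (w : (B ⊗[A] N) ⊗[B] M) :
    projectionFormulaMap κ (algebraMap A B a • w) = a • projectionFormulaMap κ w := by
  rw [algebraMap_smul, map_smul]

/-- The Frobenius `R → R` becomes an arbitrary algebra `A → B`, and the Cartier structure
`F_*ω → ω` becomes the `A`-linear map `κ : M → P`. -/
theorem cartier_structure_from_gamma_general {L : Type*} [AddCommMonoid L] [Module B L]
    (κ : M →ₗ[A] P) :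
    (∃! Φ : (B ⊗[A] N) ⊗[B] M →+ N ⊗[A] P,
        ∀ (b : B) (n : N) (x : M), Φ ((b ⊗ₜ[A] n) ⊗ₜ[B] x) = n ⊗ₜ[A] κ (b • x)) ∧
    (∀ Φ : (B ⊗[A] N) ⊗[B] M →+ N ⊗[A] P,
        (∀ (b : B) (n : N) (x : M), Φ ((b ⊗ₜ[A] n) ⊗ₜ[B] x) = n ⊗ₜ[A] κ (b • x)) →
        ∀ γ : L →ₗ[B] B ⊗[A] N,
          (∀ y z : L ⊗[B] M,
            Φ (TensorProduct.map γ LinearMap.id (y + z))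
              = Φ (TensorProduct.map γ LinearMap.id y)
                + Φ (TensorProduct.map γ LinearMap.id z)) ∧
          (∀ (a : A) (y : L ⊗[B] M),
            Φ (TensorProduct.map γ LinearMap.id (algebraMap A B a • y))
              = a • Φ (TensorProduct.map γ LinearMap.id y))) := by
  refine ⟨⟨(projectionFormulaMap κ).toAddMonoidHom, projectionFormulaMap_tmul_tmul κ,
    fun Ψ hΨ => eq_projectionFormulaMap hΨ⟩, fun Φ hΦ γ => ⟨fun y z => ?_, fun a y => ?_⟩⟩
  · rw [map_add, map_add]
  · obtain rfl := eq_projectionFormulaMap hΦ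
    rw [map_smul]
    exact projectionFormulaMap_algebraMap_smul κ a _

end BaseChange

noncomputable instance : Algebra (FrobBase p R) R where
  algebraMap := frobHom p R
  commutes' _ _ := mul_comm _ _
  smul_def' _ _ := rfl

/-- The Frobenius pushforward `F_*ω`: the `R`-module `ω`, regarded also as a module over the
source `FrobBase p R` of the Frobenius through `a • x = a ^ p • x`. -/
def FrobPush (_p : ℕ) (_R : Type*) (ω : Type u) : Type u := ω

namespace FrobPush

variable (ω : Type*) [AddCommGroup ω] [Module R ω]

instance : AddCommGroup (FrobPush p R ω) :=
  inferInstanceAs (AddCommGroup ω)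

instance : Module R (FrobPush p R ω) :=
  inferInstanceAs (Module R ω)

noncomputable instance : Module (FrobBase p R) (FrobPush p R ω) :=
  Module.compHom ω (frobHom p R)

instance : IsScalarTower (FrobBase p R) R (FrobPush p R ω) :=
  .of_algebraMap_smul fun _ _ => rfl

end FrobPush

variable {p R} in
/-- A Cartier structure on `ω`, encoded as a linear map `F_*ω → ω`. -/
def cartierLinearMap {ω : Type*} [AddCommGroup ω] [Module R ω] (κ : ω → ω)
    (hadd : ∀ x y : ω, κ (x + y) = κ x + κ y)
    (hsemi : ∀ (r : R) (x : ω), κ (r ^ p • x) = r • κ x) :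
    FrobPush p R ω →ₗ[FrobBase p R] FrobRes p R ω where
  toFun := κ
  map_add' := hadd
  map_smul' := hsemi

/-- Let `R` be a commutative ring of prime characteristic `p`, `ω` an `R`-module with a
Cartier structure `κω`, and `N` an `R`-module.  Then (i) there is a well-defined additive map
`Φ : F^*N ⊗[R] ω → N ⊗[R] ω` determined by `Φ ((r ⊗ n) ⊗ x) = n ⊗ κω (r • x)`, and (ii) for
every `R`-linear `γ : N → F^*N` the composite `K = Φ ∘ (γ ⊗ id)` is a Cartier structure on
`N ⊗[R] ω`. -/
theorem cartier_structure_from_gamma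
    (p : ℕ) [Fact p.Prime] (R : Type*) [CommRing R] [CharP R p]
    (ω : Type*) [AddCommGroup ω] [Module R ω]
    (κω : ω → ω) (hκadd : ∀ x y : ω, κω (x + y) = κω x + κω y)
    (hκsemi : ∀ (r : R) (x : ω), κω (r ^ p • x) = r • κω x)
    (N : Type*) [AddCommGroup N] [Module R N] :
    (∃! Φ : FrobPull p R N ⊗[R] ω →+ N ⊗[R] ω,
        ∀ (r : R) (n : N) (x : ω),
          Φ (FrobPull.tmul p R r n ⊗ₜ[R] x) = n ⊗ₜ[R] κω (r • x)) ∧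
    (∀ Φ : FrobPull p R N ⊗[R] ω →+ N ⊗[R] ω,
        (∀ (r : R) (n : N) (x : ω),
          Φ (FrobPull.tmul p R r n ⊗ₜ[R] x) = n ⊗ₜ[R] κω (r • x)) →
        ∀ γ : N →ₗ[R] FrobPull p R N,
          (∀ y z : N ⊗[R] ω,
            Φ (TensorProduct.map γ LinearMap.id (y + z))
              = Φ (TensorProduct.map γ LinearMap.id y)
                + Φ (TensorProduct.map γ LinearMap.id z)) ∧
          (∀ (r : R) (y : N ⊗[R] ω),
            Φ (TensorProduct.map γ LinearMap.id (r ^ p • y))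
              = r • Φ (TensorProduct.map γ LinearMap.id y))) := by
  exact (cartier_structure_from_gamma_general (B := R) (N := FrobRes p R N) (L := N)
    (cartierLinearMap κω hκadd hκsemi) :)

end Frob
end

section
/- Let p be a prime, R a commutative ring of characteristic p, (M, κ) an R-module with a Cartier structure, and T ⊆ R a multiplicative submonoid. Then there exists a unique Cartier structure κ_T on the localized T^{−1}R-module T^{−1}M (i.e. an additive map with κ_T(u^p • x) = u • κ_T(x) for all u ∈ T^{−1}R and x ∈ T^{−1}M) such that κ_T(m/1) = κ(m)/1 for all m ∈ M. It is given by κ_T(m/t) = κ(t^{p−1}·m)/t. Moreover, if κ is nilpotent, i.e. the e-fold composite κ^e is zero for some e, then κ_T^e = 0 as well. -/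
/-!
If `κT` is a Cartier structure on `T⁻¹M` extending `κ`, then
`t • κT (m/t) = κT (t ^ p • (m/t)) = κT ((t ^ (p - 1) • m)/1) = κ (t ^ (p - 1) • m)/1`,
and dividing by `t` forces the formula for `κT`. The iterates of `κT` extend those of `κ` and
satisfy the same identity for the exponent `p ^ e`, so the formula with `p ^ e` in place of `p`
expresses `κT^[e]` through `κ^[e]`, and nilpotency is preserved.
-/

/-- The multiplicative half of a Cartier structure: `κ` is homogeneous of degree `1 / q`. Additivity
is kept separate, because along a localization it is inherited from the base. -/
def IsRootHomogeneous (q : ℕ) (R : Type*) {M : Type*} [Monoid R] [SMul R M] (κ : M → M) : Prop :=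
  ∀ (r : R) (m : M), κ (r ^ q • m) = r • κ m

theorem IsRootHomogeneous.iterate {q : ℕ} {R M : Type*} [Monoid R] [SMul R M] {κ : M → M}
    (hκ : IsRootHomogeneous q R κ) (e : ℕ) : IsRootHomogeneous (q ^ e) R κ^[e] := by
  intro r m
  induction e generalizing m with
  | zero => simp
  | succ e ih => rw [Function.iterate_succ_apply, Function.iterate_succ_apply, pow_succ, pow_mul,
      hκ, ih]

theorem isRootHomogeneous_iff_of_isLocalization {q : ℕ} {R A N : Type*} [CommSemiring R]
    (T : Submonoid R) [CommSemiring A] [Algebra R A] [IsLocalization T A] [AddCommMonoid N]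
    [Module R N] [Module A N] [IsScalarTower R A N] {κ : N → N} :
    IsRootHomogeneous q A κ ↔ IsRootHomogeneous q R κ := by
  refine ⟨fun hκ r x => ?_, fun hκ u x => ?_⟩
  · simpa only [← map_pow, algebraMap_smul] using hκ (algebraMap R A r) x
  · obtain ⟨⟨r, t⟩, hu⟩ := IsLocalization.surj T u
    have hu' : (t : R) • u = algebraMap R A r := by rw [Algebra.smul_def, mul_comm, hu]
    refine (IsLocalization.map_units A t).smul_left_cancel.1 ?_
    simp only [algebraMap_smul]
    calc (t : R) • κ (u ^ q • x)
        = κ (((t : R) • u) ^ q • x) := by rw [← hκ, smul_pow, smul_assoc]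
      _ = κ (r ^ q • x) := by rw [hu', ← map_pow, algebraMap_smul]
      _ = (t : R) • u • κ x := by rw [hκ, ← smul_assoc, hu', algebraMap_smul]

section Localization

open IsLocalizedModule (mk')

variable {q : ℕ} {R M N : Type*} [CommSemiring R] [AddCommMonoid M] [AddCommMonoid N]
  [Module R M] [Module R N] (f : M →ₗ[R] N) {κ : M → M} {κT : N → N}

section Fractions

variable {T : Submonoid R} [IsLocalizedModule T f]

variable (q κ) in
/-- The fraction `κ (t ^ (q - 1) • m) / t`, the value at `m / t` of the extension of `κ` to the
localization `f`. The exponent `q - 1` is truncated at `q = 0`. -/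
noncomputable def rootFraction (m : M) (t : T) : N :=
  mk' f (κ ((t : R) ^ (q - 1) • m)) t

theorem rootFraction_one (m : M) : rootFraction q f κ m (1 : T) = f (κ m) := by
  simp [rootFraction]

theorem rootFraction_add (hadd : ∀ m n, κ (m + n) = κ m + κ n) (m n : M) (t : T) :
    rootFraction q f κ (m + n) t = rootFraction q f κ m t + rootFraction q f κ n t := by
  simp only [rootFraction, smul_add, hadd, IsLocalizedModule.mk'_add]

theorem rootFraction_pow_smul (hκ : IsRootHomogeneous q R κ) (r : R) (m : M) (t : T) :
    rootFraction q f κ (r ^ q • m) t = r • rootFraction q f κ m t := by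
  rw [rootFraction, smul_comm, hκ, IsLocalizedModule.mk'_smul, rootFraction]

theorem rootFraction_cancel_left (hq : q ≠ 0) (hκ : IsRootHomogeneous q R κ) (m : M) (s t : T) :
    rootFraction q f κ (s • m) (s * t) = rootFraction q f κ m t := by
  have hpow : ((s * t : T) : R) ^ (q - 1) • s • m = (s : R) ^ q • (t : R) ^ (q - 1) • m := by
    rw [Submonoid.smul_def, Submonoid.coe_mul, smul_smul, smul_smul, mul_pow, mul_right_comm,
      pow_sub_one_mul hq]
  rw [rootFraction, hpow, hκ, ← Submonoid.smul_def, IsLocalizedModule.mk'_cancel_left, rootFraction]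

theorem rootFraction_congr (hq : q ≠ 0) (hκ : IsRootHomogeneous q R κ) {m n : M} {s t : T}
    (h : mk' f m s = mk' f n t) : rootFraction q f κ m s = rootFraction q f κ n t := by
  obtain ⟨u, hu⟩ := (IsLocalizedModule.mk'_eq_mk'_iff f m n s t).1 h
  calc rootFraction q f κ m s
      = rootFraction q f κ ((u * t) • m) (u * t * s) :=
        (rootFraction_cancel_left f hq hκ m (u * t) s).symm
    _ = rootFraction q f κ ((u * s) • n) (u * s * t) := by
        rw [mul_smul, ← hu, ← mul_smul, mul_right_comm]
    _ = rootFraction q f κ n t := rootFraction_cancel_left f hq hκ n (u * s) t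

theorem IsRootHomogeneous.map_mk'_of_semiconj (hq : q ≠ 0) (hκT : IsRootHomogeneous q R κT)
    (hf : Function.Semiconj f κ κT) (m : M) (t : T) :
    κT (mk' f m t) = rootFraction q f κ m t := by
  refine (IsLocalizedModule.mk'_eq_iff.2 ?_).symm
  calc f (κ ((t : R) ^ (q - 1) • m))
      = κT ((t : R) ^ (q - 1) • f m) := by rw [hf, map_smul]
    _ = κT ((t : R) ^ q • mk' f m t) := by
        rw [← IsLocalizedModule.mk'_cancel' f m t, Submonoid.smul_def, smul_smul,
          pow_sub_one_mul hq]
    _ = t • κT (mk' f m t) := hκT t _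

end Fractions

theorem exists_isRootHomogeneous_semiconj (T : Submonoid R) [IsLocalizedModule T f] (hq : q ≠ 0)
    (hκ : IsRootHomogeneous q R κ) :
    ∃ κT : N → N, IsRootHomogeneous q R κT ∧ Function.Semiconj f κ κT := by
  have hfactors : (Function.uncurry (rootFraction q f κ : M → T → N)).FactorsThrough
      (Function.uncurry (mk' f)) := fun _ _ h => rootFraction_congr f hq hκ h
  obtain ⟨κT, hκT⟩ := (Function.factorsThrough_iff _).1 hfactors
  have map_mk' (m : M) (t : T) : κT (mk' f m t) = rootFraction q f κ m t :=
    (congrFun hκT (m, t)).symm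
  refine ⟨κT, fun r x => ?_, fun m => ?_⟩
  · obtain ⟨⟨m, t⟩, rfl⟩ := IsLocalizedModule.mk'_surjective T f x
    simp only [Function.uncurry_apply_pair]
    rw [← IsLocalizedModule.mk'_smul, map_mk', map_mk', rootFraction_pow_smul f hκ]
  · rw [← rootFraction_one f (T := T), ← map_mk', IsLocalizedModule.mk'_one]

namespace IsRootHomogeneous

theorem eq_of_semiconj (T : Submonoid R) [IsLocalizedModule T f] (hq : q ≠ 0)
    {κ₁ κ₂ : N → N} (h₁ : IsRootHomogeneous q R κ₁) (hf₁ : Function.Semiconj f κ κ₁)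
    (h₂ : IsRootHomogeneous q R κ₂) (hf₂ : Function.Semiconj f κ κ₂) : κ₁ = κ₂ := by
  funext x
  obtain ⟨⟨m, t⟩, rfl⟩ := IsLocalizedModule.mk'_surjective T f x
  exact (h₁.map_mk'_of_semiconj f hq hf₁ m t).trans (h₂.map_mk'_of_semiconj f hq hf₂ m t).symm

theorem map_add_of_semiconj (T : Submonoid R) [IsLocalizedModule T f] (hq : q ≠ 0)
    (hκT : IsRootHomogeneous q R κT) (hf : Function.Semiconj f κ κT)
    (hadd : ∀ m n, κ (m + n) = κ m + κ n) (x y : N) :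
    κT (x + y) = κT x + κT y := by
  obtain ⟨⟨m, s⟩, rfl⟩ := IsLocalizedModule.mk'_surjective T f x
  obtain ⟨⟨n, t⟩, rfl⟩ := IsLocalizedModule.mk'_surjective T f y
  simp only [Function.uncurry_apply_pair]
  rw [← IsLocalizedModule.mk'_cancel_right f m s t, ← IsLocalizedModule.mk'_cancel_left f n s t,
    ← IsLocalizedModule.mk'_add, hκT.map_mk'_of_semiconj f hq hf, rootFraction_add f hadd,
    hκT.map_mk'_of_semiconj f hq hf, hκT.map_mk'_of_semiconj f hq hf]

theorem iterate_eq_zero_of_semiconj (T : Submonoid R) [IsLocalizedModule T f] (hq : q ≠ 0)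
    (hκT : IsRootHomogeneous q R κT) (hf : Function.Semiconj f κ κT) {e : ℕ} (he : κ^[e] = 0) :
    κT^[e] = 0 := by
  funext x
  obtain ⟨⟨m, t⟩, rfl⟩ := IsLocalizedModule.mk'_surjective T f x
  calc κT^[e] (mk' f m t)
      = rootFraction (q ^ e) f κ^[e] m t :=
        (hκT.iterate e).map_mk'_of_semiconj f (pow_ne_zero e hq) (hf.iterate_right e) m t
    _ = 0 := by simp [rootFraction, he]

end IsRootHomogeneous

theorem cartier_structure_localization_general (T : Submonoid R) [IsLocalizedModule T f]
    (A : Type*) [CommSemiring A] [Algebra R A] [IsLocalization T A] [Module A N]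
    [IsScalarTower R A N] (hq : q ≠ 0) (hadd : ∀ m n, κ (m + n) = κ m + κ n)
    (hκ : IsRootHomogeneous q R κ) :
    (∃! κT : N → N, (∀ x y, κT (x + y) = κT x + κT y) ∧ IsRootHomogeneous q A κT ∧
      ∀ m, κT (f m) = f (κ m)) ∧
    (∀ κT : N → N, IsRootHomogeneous q A κT → (∀ m, κT (f m) = f (κ m)) →
      (∀ (m : M) (t : T), κT (mk' f m t) = mk' f (κ ((t : R) ^ (q - 1) • m)) t) ∧
      ∀ e : ℕ, κ^[e] = 0 → κT^[e] = 0) := by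
  simp only [isRootHomogeneous_iff_of_isLocalization (A := A) T]
  refine ⟨?_, fun κT hκT hf => ?_⟩
  · obtain ⟨κT, hκT, hf⟩ := exists_isRootHomogeneous_semiconj f T hq hκ
    refine ⟨κT, ⟨hκT.map_add_of_semiconj f T hq hf hadd, hκT, fun m => (hf m).symm⟩, ?_⟩
    rintro κ' ⟨-, hκ', hf'⟩
    exact hκ'.eq_of_semiconj f T hq (fun m => (hf' m).symm) hκT hf
  · have hf : Function.Semiconj f κ κT := fun m => (hf m).symm
    exact ⟨hκT.map_mk'_of_semiconj f hq hf, fun _ => hκT.iterate_eq_zero_of_semiconj f T hq hf⟩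

end Localization

/-- Let `(M, κ)` be a Cartier module over a commutative ring `R` of prime characteristic `p`
and `T ⊆ R` a multiplicative submonoid.  There is a unique Cartier structure `κ_T` on the
localized `T⁻¹R`-module `T⁻¹M` with `κ_T (m/1) = κ m / 1`; it is given by
`κ_T (m/t) = κ (t^(p-1) • m) / t`, and if `κ^e = 0` then `κ_T^e = 0`. -/
theorem cartier_structure_localization
    (p : ℕ) (hp : p.Prime) (R : Type*) [CommRing R] [CharP R p]
    (M : Type*) [AddCommGroup M] [Module R M]
    (κ : M → M) (hadd : ∀ x y : M, κ (x + y) = κ x + κ y)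
    (hsemi : ∀ (r : R) (m : M), κ (r ^ p • m) = r • κ m)
    (T : Submonoid R) :
    (∃! κT : LocalizedModule T M → LocalizedModule T M,
        (∀ x y, κT (x + y) = κT x + κT y) ∧
        (∀ (u : Localization T) (x : LocalizedModule T M), κT (u ^ p • x) = u • κT x) ∧
        (∀ m : M, κT (LocalizedModule.mk m 1) = LocalizedModule.mk (κ m) 1)) ∧
    (∀ κT : LocalizedModule T M → LocalizedModule T M,
        (∀ x y, κT (x + y) = κT x + κT y) →
        (∀ (u : Localization T) (x : LocalizedModule T M), κT (u ^ p • x) = u • κT x) →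
        (∀ m : M, κT (LocalizedModule.mk m 1) = LocalizedModule.mk (κ m) 1) →
        (∀ (m : M) (t : T),
            κT (LocalizedModule.mk m t) = LocalizedModule.mk (κ ((t : R) ^ (p - 1) • m)) t) ∧
        (∀ e : ℕ, κ^[e] = 0 → κT^[e] = 0)) := by
  obtain ⟨hexists, hformula⟩ := cartier_structure_localization_general
    (LocalizedModule.mkLinearMap T M) T (Localization T) hp.ne_zero hadd hsemi
  exact ⟨hexists, fun κT _ hsmul hmk => by
    simpa only [IsLocalizedModule.mk_eq_mk'] using hformula κT hsmul hmk⟩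
end

section
/- Let p be a prime, R a commutative ring of characteristic p, S a commutative R-algebra, and (M, κ) an R-module with a Cartier structure. Endow Hom_R(S, M) with the S-module structure (s • φ)(t) = φ(s·t). Then the map κ^♭ : Hom_R(S, M) → Hom_R(S, M) defined by κ^♭(φ)(s) = κ(φ(s^p)) is well defined (i.e. κ^♭(φ) is again R-linear) and is a Cartier structure on the S-module Hom_R(S, M): it is additive and satisfies κ^♭(s^p • φ) = s • κ^♭(φ) for all s ∈ S. -/
/-- `κ` is a `q`-Cartier structure on `M`: it is linear for the inverse of the `q`-power map of `R`.
Here `R` is a monoid rather than a commutative ring so that the definition applies to `Sᵈᵐᵃ`, which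
acts on `Hom_R(S, M)` by `(s • φ) t = φ (s * t)`. -/
def IsCartierMap (q : ℕ) (R : Type*) {M : Type*} [Monoid R] [AddMonoid M] [SMul R M]
    (κ : M →+ M) : Prop :=
  ∀ (r : R) (m : M), κ (r ^ q • m) = r • κ m

-- Mathlib's `add_pow_expChar_pow` in `S` would not do: `S` may be the zero ring, which has no
-- exponential characteristic.
theorem add_pow_expChar_pow_of_commute_of_algebra (R : Type*) {S : Type*} [CommSemiring R]
    [Semiring S] [Algebra R S] (p n : ℕ) [ExpChar R p] {x y : S} (h : Commute x y) :
    (x + y) ^ p ^ n = x ^ p ^ n + y ^ p ^ n := by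
  cases ‹ExpChar R p› with
  | zero => simp
  | prime hp =>
    have p_eq_zero : (p : S) = 0 := by
      rw [← map_natCast (algebraMap R S), CharP.cast_eq_zero, map_zero]
    obtain ⟨r, hr⟩ := h.exists_add_pow_prime_pow_eq hp n
    simpa [p_eq_zero] using hr

namespace IsCartierMap

variable {R M : Type*} [CommSemiring R] [AddCommMonoid M] [Module R M] {p n : ℕ} [ExpChar R p]
  {κ : M →+ M} (hκ : IsCartierMap (p ^ n) R κ) (S : Type*) [CommSemiring S] [Algebra R S]

/-- The map `κ^♭` induced on `Hom_R(S, M)` by a Cartier structure `κ` on `M`: compose with `κ` on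
one side and with the (iterated) Frobenius of `S` on the other. -/
def homMap : (S →ₗ[R] M) →+ (S →ₗ[R] M) where
  toFun φ :=
    { toFun := fun s ↦ κ (φ (s ^ p ^ n))
      map_add' := fun s t ↦ by
        rw [add_pow_expChar_pow_of_commute_of_algebra R p n (.all s t), map_add, map_add]
      map_smul' := fun r s ↦ by
        rw [smul_pow, map_smul, hκ, RingHom.id_apply] }
  map_zero' := LinearMap.ext fun _ ↦ map_zero κ
  map_add' _ _ := LinearMap.ext fun _ ↦ map_add κ _ _

@[simp]
theorem homMap_apply (φ : S →ₗ[R] M) (s : S) : hκ.homMap S φ s = κ (φ (s ^ p ^ n)) :=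
  rfl

theorem isCartierMap_homMap : IsCartierMap (p ^ n) Sᵈᵐᵃ (hκ.homMap S) := by
  intro s φ
  ext t
  simp [DomMulAct.smul_linearMap_apply, mul_pow]

end IsCartierMap

theorem cartier_structure_on_hom_general
    (p n : ℕ) (R : Type*) [CommSemiring R] [ExpChar R p]
    (S : Type*) [CommSemiring S] [Algebra R S]
    (M : Type*) [AddCommMonoid M] [Module R M]
    (κ : M →+ M) (hκ : IsCartierMap (p ^ n) R κ) :
    ∃ K : (S →ₗ[R] M) →+ (S →ₗ[R] M),
      (∀ (φ : S →ₗ[R] M) (s : S), K φ s = κ (φ (s ^ p ^ n))) ∧ IsCartierMap (p ^ n) Sᵈᵐᵃ K :=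
  ⟨hκ.homMap S, hκ.homMap_apply S, hκ.isCartierMap_homMap S⟩

/-- Let `R` be a commutative ring of prime characteristic `p`, `S` a commutative `R`-algebra and
`(M, κ)` an `R`-module with a Cartier structure.  Then `κ♭ φ := κ ∘ φ ∘ (·^p)` is a well-defined
map on `Hom_R(S, M)` (i.e. `κ♭ φ` is again `R`-linear), it is additive, and it satisfies
`κ♭ (s^p • φ) = s • κ♭ φ` for the `S`-action `(s • φ) t = φ (s * t)`; that is, `κ♭` is a Cartier
structure on the `S`-module `Hom_R(S, M)`. -/
theorem cartier_structure_on_hom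
    (p : ℕ) (hp : p.Prime) (R : Type*) [CommRing R] [CharP R p]
    (S : Type*) [CommRing S] [Algebra R S]
    (M : Type*) [AddCommGroup M] [Module R M]
    (κ : M → M) (hadd : ∀ x y : M, κ (x + y) = κ x + κ y)
    (hsemi : ∀ (r : R) (m : M), κ (r ^ p • m) = r • κ m) :
    ∃ K : (S →ₗ[R] M) → (S →ₗ[R] M),
      (∀ (φ : S →ₗ[R] M) (s : S), K φ s = κ (φ (s ^ p))) ∧
      (∀ φ ψ : S →ₗ[R] M, K (φ + ψ) = K φ + K ψ) ∧
      (∀ (s : S) (φ : S →ₗ[R] M),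
        K (φ ∘ₗ LinearMap.mul R S (s ^ p)) = (K φ) ∘ₗ LinearMap.mul R S s) := by
  have : ExpChar R p := .prime hp
  have hκ : IsCartierMap (p ^ 1) R (AddMonoidHom.mk' κ hadd) := by simpa [IsCartierMap] using hsemi
  obtain ⟨K, K_apply, hK⟩ := cartier_structure_on_hom_general p 1 R S M _ hκ
  have smul_eq_comp_mul (s : S) (φ : S →ₗ[R] M) :
      DomMulAct.mk s • φ = φ ∘ₗ LinearMap.mul R S s := rfl
  refine ⟨K, by simpa using K_apply, map_add K, fun s φ ↦ ?_⟩
  simpa only [pow_one, ← DomMulAct.mk_pow, smul_eq_comp_mul] using hK (DomMulAct.mk s) φ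
end
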